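/- arXiv:1209.5623 — 2 statements merged into one kernel-verified Lean document; each statement's English description precedes it below -/
import Mathlib

section
/- There is a constant C, depending only on the dimension n, with the following property. Let n ≥ 2 and let d : ℝⁿ → ℝ³ be smooth with |d(x)| = 1 for all x and with ∇d a Schwartz function. Then ∫_{ℝⁿ} Δ(|∇d|² d)·Δd dx ≤ C( ‖∇d‖_{L^∞}² ‖Δd‖_{L²} ‖∇²d‖_{L²} + ‖∇d‖_{L^∞} ‖∇²d‖_{L²} ‖∇Δd‖_{L²} + ‖∇d‖_{L^∞}² ‖Δd‖_{L²}² ). -/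
open MeasureTheory Real

noncomputable section

/-- `pd i f x` is the `i`-th partial derivative `∂ᵢ f (x)` of `f : ℝⁿ → ℝ`. -/
def pd {n : ℕ} (i : Fin n) (f : EuclideanSpace ℝ (Fin n) → ℝ)
    (x : EuclideanSpace ℝ (Fin n)) : ℝ :=
  fderiv ℝ f x (EuclideanSpace.single i 1)

/-- `lap f x` is the Laplacian `Δf(x) = Σᵢ ∂ᵢ∂ᵢ f (x)`. -/
def lap {n : ℕ} (f : EuclideanSpace ℝ (Fin n) → ℝ)
    (x : EuclideanSpace ℝ (Fin n)) : ℝ :=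
  ∑ i, pd i (fun y => pd i f y) x

/-- ‖∇d‖_{L^∞}: essential supremum of |∇d| for d : ℝⁿ → ℝ³. -/
def gradLinf {n : ℕ} (d : EuclideanSpace ℝ (Fin n) → EuclideanSpace ℝ (Fin 3)) : ℝ :=
  essSup (fun x => Real.sqrt (∑ i, ∑ k : Fin 3, (pd i (fun z => d z k) x) ^ 2)) volume

/-- ‖Δd‖_{L²} for d : ℝⁿ → ℝ³. -/
def lapL2 {n : ℕ} (d : EuclideanSpace ℝ (Fin n) → EuclideanSpace ℝ (Fin 3)) : ℝ :=
  Real.sqrt (∑ k : Fin 3, ∫ x, (lap (fun z => d z k) x) ^ 2)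

/-- ‖∇²d‖_{L²} for d : ℝⁿ → ℝ³. -/
def hessL2 {n : ℕ} (d : EuclideanSpace ℝ (Fin n) → EuclideanSpace ℝ (Fin 3)) : ℝ :=
  Real.sqrt (∑ i, ∑ j, ∑ k : Fin 3, ∫ x, (pd i (pd j (fun z => d z k)) x) ^ 2)

/-- ‖∇Δd‖_{L²} for d : ℝⁿ → ℝ³. -/
def gradLapL2 {n : ℕ} (d : EuclideanSpace ℝ (Fin n) → EuclideanSpace ℝ (Fin 3)) : ℝ :=
  Real.sqrt (∑ i, ∑ k : Fin 3, ∫ x, (pd i (lap (fun z => d z k)) x) ^ 2)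

/-- ‖∇u‖_{L²} for a vector field u : ℝⁿ → ℝⁿ. -/
def gradL2u {n : ℕ} (u : EuclideanSpace ℝ (Fin n) → EuclideanSpace ℝ (Fin n)) : ℝ :=
  Real.sqrt (∑ i, ∑ j, ∫ x, (pd i (fun y => u y j) x) ^ 2)

/-- ‖Δu‖_{L²} for a vector field u : ℝⁿ → ℝⁿ. -/
def lapL2u {n : ℕ} (u : EuclideanSpace ℝ (Fin n) → EuclideanSpace ℝ (Fin n)) : ℝ :=
  Real.sqrt (∑ i, ∫ x, (lap (fun y => u y i) x) ^ 2)

/-!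
Put `f = |∇d|²`. In `∫ Δ(f d)·Δd` the only term with two derivatives on `f` is `∫ Δf (d·Δd)`;
moving one of them away by the divergence theorem leaves
`∑ₖ ∫ ((∇f·∇dₖ) Δdₖ + f (Δdₖ)² - (∇f·∇Δdₖ) dₖ)`.
Since `|∇f| ≤ 2 |∇d| |∇²d|` and `|d| = 1`, the integrand is at most
`2 |∇d|² |Δd| |∇²d| + |∇d|² |Δd|² + 2 |∇d| |∇²d| |∇Δd|`,
and Cauchy–Schwarz after pulling out `‖∇d‖_∞` gives the estimate with `C = 2` in every dimension.
-/

variable {n : ℕ}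

section IsSchwartz

variable {E ι : Type*} [NormedAddCommGroup E] [NormedSpace ℝ E]

/-- `f` is the underlying function of a Schwartz function. This is a predicate on plain functions
because `pd` and `lap` act on those. -/
def IsSchwartz (f : E → ℝ) : Prop :=
  ∃ g : SchwartzMap E ℝ, ⇑g = f

namespace IsSchwartz

variable {f u : E → ℝ}

lemma hasTemperateGrowth (hf : IsSchwartz f) : f.HasTemperateGrowth := by
  obtain ⟨g, rfl⟩ := hf
  exact g.hasTemperateGrowth

lemma differentiable (hf : IsSchwartz f) : Differentiable ℝ f := by
  obtain ⟨g, rfl⟩ := hf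
  exact g.differentiable

lemma exists_le (hf : IsSchwartz f) : ∃ C, ∀ x, f x ≤ C := by
  obtain ⟨g, rfl⟩ := hf
  exact ⟨_, fun x => (le_abs_self _).trans (g.norm_le_seminorm ℝ x)⟩

lemma mul (hf : IsSchwartz f) (hu : u.HasTemperateGrowth) : IsSchwartz (fun x => f x * u x) := by
  obtain ⟨g, rfl⟩ := hf
  exact ⟨SchwartzMap.bilinLeftCLM (ContinuousLinearMap.mul ℝ ℝ) hu g, rfl⟩

lemma pow_two (hf : IsSchwartz f) : IsSchwartz (fun x => f x ^ 2) := by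
  simpa only [sq] using hf.mul hf.hasTemperateGrowth

lemma add (hf : IsSchwartz f) (hu : IsSchwartz u) : IsSchwartz (fun x => f x + u x) := by
  obtain ⟨g, rfl⟩ := hf
  obtain ⟨h, rfl⟩ := hu
  exact ⟨g + h, rfl⟩

lemma sub (hf : IsSchwartz f) (hu : IsSchwartz u) : IsSchwartz (fun x => f x - u x) := by
  obtain ⟨g, rfl⟩ := hf
  obtain ⟨h, rfl⟩ := hu
  exact ⟨g - h, rfl⟩

lemma sum {s : Finset ι} {F : ι → E → ℝ} (hF : ∀ i, IsSchwartz (F i)) :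
    IsSchwartz (fun x => ∑ i ∈ s, F i x) := by
  choose g hg using hF
  exact ⟨∑ i ∈ s, g i, by ext x; simp [hg]⟩

lemma integrable [MeasurableSpace E] [BorelSpace E] [SecondCountableTopology E]
    (hf : IsSchwartz f) (μ : Measure E) [μ.HasTemperateGrowth] : Integrable f μ := by
  obtain ⟨g, rfl⟩ := hf
  exact g.integrable

end IsSchwartz

end IsSchwartz

section PartialDerivatives

variable {ι : Type*} {f u : EuclideanSpace ℝ (Fin n) → ℝ} {x : EuclideanSpace ℝ (Fin n)}

lemma pd_mul (i : Fin n) (hf : DifferentiableAt ℝ f x) (hu : DifferentiableAt ℝ u x) :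
    pd i (fun y => f y * u y) x = pd i f x * u x + f x * pd i u x := by
  simp only [pd, fderiv_fun_mul hf hu, add_apply, smul_apply, smul_eq_mul]
  ring

lemma pd_add (i : Fin n) (hf : DifferentiableAt ℝ f x) (hu : DifferentiableAt ℝ u x) :
    pd i (fun y => f y + u y) x = pd i f x + pd i u x := by
  simp [pd, fderiv_fun_add hf hu]

lemma pd_pow_two (i : Fin n) (hf : DifferentiableAt ℝ f x) :
    pd i (fun y => f y ^ 2) x = 2 * (f x * pd i f x) := by
  simp only [sq, pd_mul i hf hf]
  ring

lemma pd_sum {s : Finset ι} {F : ι → EuclideanSpace ℝ (Fin n) → ℝ} (i : Fin n)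
    (hF : ∀ j ∈ s, DifferentiableAt ℝ (F j) x) :
    pd i (fun y => ∑ j ∈ s, F j y) x = ∑ j ∈ s, pd i (F j) x := by
  simp [pd, fderiv_fun_sum hF]

lemma fderiv_eq_sum_pd (f : EuclideanSpace ℝ (Fin n) → ℝ) (x : EuclideanSpace ℝ (Fin n)) :
    fderiv ℝ f x = ∑ i, pd i f x • (EuclideanSpace.proj i : EuclideanSpace ℝ (Fin n) →L[ℝ] ℝ) := by
  ext v
  conv_lhs => rw [← (EuclideanSpace.basisFun (Fin n) ℝ).sum_repr v]
  simp [pd, mul_comm]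

lemma differentiable_pd (hf : ContDiff ℝ 2 f) (i : Fin n) : Differentiable ℝ (pd i f) :=
  ((hf.fderiv_right (m := 1) le_rfl).clm_apply contDiff_const).differentiable one_ne_zero

lemma hasTemperateGrowth_pd (hf : f.HasTemperateGrowth) (i : Fin n) :
    (pd i f).HasTemperateGrowth := by
  have hf' : (fderiv ℝ f).HasTemperateGrowth := by
    refine ⟨hf.1.fderiv_right (by simp), fun m => ?_⟩
    simpa only [norm_iteratedFDeriv_fderiv] using hf.2 (m + 1)
  exact (ContinuousLinearMap.apply ℝ ℝ (EuclideanSpace.single i 1)).hasTemperateGrowth.comp hf'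

lemma hasTemperateGrowth_lap (hf : f.HasTemperateGrowth) : (lap f).HasTemperateGrowth :=
  .sum fun i _ => hasTemperateGrowth_pd (hasTemperateGrowth_pd hf i) i

lemma hasTemperateGrowth_of_pd (hf : Differentiable ℝ f) {C : ℝ} {k : ℕ}
    (hC : ∀ x, ‖f x‖ ≤ C * (1 + ‖x‖) ^ k) (hpd : ∀ i, (pd i f).HasTemperateGrowth) :
    f.HasTemperateGrowth := by
  refine .of_fderiv ?_ hf hC
  rw [funext (fderiv_eq_sum_pd f)]
  exact .sum fun i _ => (hpd i).smul (.const _)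

namespace IsSchwartz

lemma pd (hf : IsSchwartz f) (i : Fin n) : IsSchwartz (pd i f) := by
  obtain ⟨g, rfl⟩ := hf
  exact ⟨LineDeriv.lineDerivOp (EuclideanSpace.single i (1 : ℝ)) g, rfl⟩

lemma lap_of_pd (hf : ∀ i, IsSchwartz (_root_.pd i f)) : IsSchwartz (lap f) :=
  sum fun i => (hf i).pd i

lemma integral_pd (hf : IsSchwartz f) (i : Fin n) : ∫ x, _root_.pd i f x = 0 := by
  have hf' : Integrable (fun x => _root_.pd i f x) := (hf.pd i).integrable _
  simpa [_root_.pd] using integral_mul_fderiv_eq_neg_fderiv_mul_of_integrable (μ := volume)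
    (f := fun _ => (1 : ℝ)) (g := f) (v := EuclideanSpace.single i 1) (by simp)
    (by simpa [_root_.pd] using hf') (by simpa using hf.integrable volume)
    (fun _ _ => differentiableAt_const _) (fun x _ => hf.differentiable x)

end IsSchwartz

end PartialDerivatives

section Green

variable {f u v : EuclideanSpace ℝ (Fin n) → ℝ}

/-- The inner product `∇f · ∇u` of two gradients. -/
def gradInner (f u : EuclideanSpace ℝ (Fin n) → ℝ) (x : EuclideanSpace ℝ (Fin n)) : ℝ :=
  ∑ i, pd i f x * pd i u x

/-- The integrand `(∇f·∇u) v + f Δu v - (∇f·∇v) u` left from `Δ(fu) v` after moving one derivative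
off the only term carrying two derivatives of `f`. -/
def greenIntegrand (f u v : EuclideanSpace ℝ (Fin n) → ℝ) (x : EuclideanSpace ℝ (Fin n)) : ℝ :=
  gradInner f u x * v x + f x * (lap u x * v x) - gradInner f v x * u x

lemma lap_mul_mul_eq_greenIntegrand_add_sum_pd (hf : ContDiff ℝ 2 f) (hu : ContDiff ℝ 2 u)
    (hv : Differentiable ℝ v) (x : EuclideanSpace ℝ (Fin n)) :
    lap (fun y => f y * u y) x * v x =
      greenIntegrand f u v x + ∑ i, pd i (fun y => pd i f y * u y * v y) x := by
  have hf₁ : Differentiable ℝ f := hf.differentiable two_ne_zero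
  have hu₁ : Differentiable ℝ u := hu.differentiable two_ne_zero
  have hf₂ := differentiable_pd hf
  have hu₂ := differentiable_pd hu
  have pd_mul_fun (i : Fin n) :
      pd i (fun y => f y * u y) = fun y => pd i f y * u y + f y * pd i u y :=
    funext fun y => pd_mul i (hf₁ y) (hu₁ y)
  have leibniz (i : Fin n) : pd i (pd i (fun y => f y * u y)) x * v x =
      pd i f x * pd i u x * v x + f x * (pd i (pd i u) x * v x) - pd i f x * pd i v x * u x
        + pd i (fun y => pd i f y * u y * v y) x := by
    rw [pd_mul_fun, pd_add i ((hf₂ i x).fun_mul (hu₁ x)) ((hf₁ x).fun_mul (hu₂ i x)),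
      pd_mul i (hf₁ x) (hu₂ i x), pd_mul i ((hf₂ i x).fun_mul (hu₁ x)) (hv x)]
    ring
  simp only [greenIntegrand, gradInner, lap, Finset.sum_mul, Finset.mul_sum, leibniz,
    Finset.sum_add_distrib, Finset.sum_sub_distrib]

lemma isSchwartz_gradInner (hf : IsSchwartz f) (hu : u.HasTemperateGrowth) :
    IsSchwartz (gradInner f u) :=
  .sum fun i => (hf.pd i).mul (hasTemperateGrowth_pd hu i)

lemma isSchwartz_greenIntegrand (hf : IsSchwartz f) (hu : u.HasTemperateGrowth)
    (hv : v.HasTemperateGrowth) : IsSchwartz (greenIntegrand f u v) :=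
  (((isSchwartz_gradInner hf hu).mul hv).add
    (hf.mul ((hasTemperateGrowth_lap hu).mul hv))).sub ((isSchwartz_gradInner hf hv).mul hu)

lemma integral_lap_mul_mul (hf : IsSchwartz f) (hu : u.HasTemperateGrowth)
    (hv : v.HasTemperateGrowth) :
    ∫ x, lap (fun y => f y * u y) x * v x = ∫ x, greenIntegrand f u v x := by
  have hpd (i : Fin n) : IsSchwartz (fun y => pd i f y * u y * v y) := ((hf.pd i).mul hu).mul hv
  have hdiv (i : Fin n) := ((hpd i).pd i).integrable volume
  have two_le : (2 : WithTop ℕ∞) ≤ (⊤ : ℕ∞) := WithTop.coe_le_coe.mpr le_top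
  simp_rw [lap_mul_mul_eq_greenIntegrand_add_sum_pd (hf.hasTemperateGrowth.1.of_le two_le)
    (hu.1.of_le two_le) (hv.1.differentiable (by simp))]
  rw [integral_add ((isSchwartz_greenIntegrand hf hu hv).integrable _)
      (integrable_finsetSum _ fun i _ => hdiv i),
    integral_finsetSum _ fun i _ => hdiv i]
  simp [(hpd _).integral_pd]

lemma integral_sum_lap_mul_mul {κ : Type*} [Fintype κ] {u v : κ → EuclideanSpace ℝ (Fin n) → ℝ}
    (hf : IsSchwartz f) (hu : ∀ k, (u k).HasTemperateGrowth) (hv : ∀ k, (v k).HasTemperateGrowth) :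
    ∫ x, ∑ k, lap (fun y => f y * u k y) x * v k x =
      ∫ x, ∑ k, greenIntegrand f (u k) (v k) x := by
  rw [integral_finsetSum _ fun k _ =>
      ((IsSchwartz.lap_of_pd fun i => (hf.mul (hu k)).pd i).mul (hv k)).integrable _,
    integral_finsetSum _ fun k _ => (isSchwartz_greenIntegrand hf (hu k) (hv k)).integrable _]
  simp only [integral_lap_mul_mul hf (hu _) (hv _)]

end Green

section CauchySchwarz

lemma abs_sum_sum_mul_le_sqrt_mul_sqrt {ι κ : Type*} [Fintype ι] [Fintype κ] (a b : ι → κ → ℝ) :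
    |∑ i, ∑ k, a i k * b i k| ≤ √(∑ i, ∑ k, a i k ^ 2) * √(∑ i, ∑ k, b i k ^ 2) := by
  rw [← Real.sqrt_mul (by positivity)]
  simp only [← Fintype.sum_prod_type']
  exact Real.abs_le_sqrt (Finset.sum_mul_sq_le_sq_mul_sq _ _ _)

lemma abs_sum_gradInner_mul_le {κ : Type*} [Fintype κ] (b : κ → ℝ)
    (f : EuclideanSpace ℝ (Fin n) → ℝ) (w : κ → EuclideanSpace ℝ (Fin n) → ℝ)
    (x : EuclideanSpace ℝ (Fin n)) :
    |∑ k, gradInner f (w k) x * b k| ≤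
      √(∑ i, pd i f x ^ 2) * √(∑ k, b k ^ 2) * √(∑ i, ∑ k, pd i (w k) x ^ 2) := by
  calc |∑ k, gradInner f (w k) x * b k| = |∑ i, ∑ k, (pd i f x * b k) * pd i (w k) x| := by
        simp only [gradInner, Finset.sum_mul, mul_right_comm _ (b _)]
        rw [Finset.sum_comm]
    _ ≤ √(∑ i, ∑ k, (pd i f x * b k) ^ 2) * √(∑ i, ∑ k, pd i (w k) x ^ 2) :=
        abs_sum_sum_mul_le_sqrt_mul_sqrt _ _
    _ = √(∑ i, pd i f x ^ 2) * √(∑ k, b k ^ 2) * √(∑ i, ∑ k, pd i (w k) x ^ 2) := by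
        simp only [mul_pow, ← Finset.sum_mul_sum]
        rw [Real.sqrt_mul (by positivity)]

variable {α : Type*} [MeasurableSpace α] {μ : Measure α} {f g h : α → ℝ}

lemma memLp_two_sqrt (hf : Integrable f μ) : MemLp (fun x => √(f x)) 2 μ := by
  rw [memLp_two_iff_integrable_sq (continuous_sqrt.comp_aestronglyMeasurable hf.1)]
  simpa only [Real.sq_sqrt'] using hf.pos_part

lemma integral_mul_le_sqrt_mul_sqrt (hf : MemLp f 2 μ) (hg : MemLp g 2 μ) :
    ∫ x, f x * g x ∂μ ≤ √(∫ x, f x ^ 2 ∂μ) * √(∫ x, g x ^ 2 ∂μ) := by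
  calc ∫ x, f x * g x ∂μ ≤ ∫ x, ‖f x‖ * ‖g x‖ ∂μ :=
        integral_mono (hf.integrable_mul hg) (hf.norm.integrable_mul hg.norm) fun x =>
          (le_abs_self _).trans_eq (abs_mul _ _)
    _ ≤ √(∫ x, f x ^ 2 ∂μ) * √(∫ x, g x ^ 2 ∂μ) := by
        simpa [Real.sqrt_eq_rpow] using integral_mul_norm_le_Lp_mul_Lq (f := f) (g := g)
          Real.HolderConjugate.two_two (by simpa using hf) (by simpa using hg)

lemma integral_mul_add_mul_add_sq_le {a b c : ℝ} (ha : 0 ≤ a) (hb : 0 ≤ b) (hf : MemLp f 2 μ)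
    (hg : MemLp g 2 μ) (hh : MemLp h 2 μ) :
    ∫ x, (a * (f x * g x) + b * (g x * h x) + c * f x ^ 2) ∂μ ≤
      a * (√(∫ x, f x ^ 2 ∂μ) * √(∫ x, g x ^ 2 ∂μ))
        + b * (√(∫ x, g x ^ 2 ∂μ) * √(∫ x, h x ^ 2 ∂μ)) + c * √(∫ x, f x ^ 2 ∂μ) ^ 2 := by
  have hfg : Integrable (fun x => a * (f x * g x)) μ := (hf.integrable_mul hg).const_mul a
  have hgh : Integrable (fun x => b * (g x * h x)) μ := (hg.integrable_mul hh).const_mul b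
  rw [integral_add (hfg.fun_add hgh) (hf.integrable_sq.const_mul c), integral_add hfg hgh,
    Real.sq_sqrt (integral_nonneg fun x => sq_nonneg (f x))]
  simp only [integral_const_mul]
  gcongr
  · exact integral_mul_le_sqrt_mul_sqrt hf hg
  · exact integral_mul_le_sqrt_mul_sqrt hg hh

end CauchySchwarz

section Energies

variable {κ : Type*} [Fintype κ]

/-- The pointwise norm `|∇d|`. -/
def gradNorm (d : EuclideanSpace ℝ (Fin n) → EuclideanSpace ℝ κ)
    (x : EuclideanSpace ℝ (Fin n)) : ℝ :=
  √(∑ i, ∑ k, pd i (d · k) x ^ 2)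

/-- The pointwise Frobenius norm `|∇²d|`. -/
def hessNorm (d : EuclideanSpace ℝ (Fin n) → EuclideanSpace ℝ κ)
    (x : EuclideanSpace ℝ (Fin n)) : ℝ :=
  √(∑ i, ∑ j, ∑ k, pd i (pd j (d · k)) x ^ 2)

/-- The pointwise norm `|Δd|`. -/
def lapNorm (d : EuclideanSpace ℝ (Fin n) → EuclideanSpace ℝ κ)
    (x : EuclideanSpace ℝ (Fin n)) : ℝ :=
  √(∑ k, lap (d · k) x ^ 2)

/-- The pointwise norm `|∇Δd|`. -/
def gradLapNorm (d : EuclideanSpace ℝ (Fin n) → EuclideanSpace ℝ κ)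
    (x : EuclideanSpace ℝ (Fin n)) : ℝ :=
  √(∑ i, ∑ k, pd i (lap (d · k)) x ^ 2)

section Pointwise

variable (d : EuclideanSpace ℝ (Fin n) → EuclideanSpace ℝ κ) (x : EuclideanSpace ℝ (Fin n))

lemma gradNorm_sq : gradNorm d x ^ 2 = ∑ i, ∑ k, pd i (d · k) x ^ 2 :=
  Real.sq_sqrt (by positivity)

lemma hessNorm_sq : hessNorm d x ^ 2 = ∑ i, ∑ j, ∑ k, pd i (pd j (d · k)) x ^ 2 :=
  Real.sq_sqrt (by positivity)

lemma lapNorm_sq : lapNorm d x ^ 2 = ∑ k, lap (d · k) x ^ 2 :=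
  Real.sq_sqrt (by positivity)

lemma gradLapNorm_sq : gradLapNorm d x ^ 2 = ∑ i, ∑ k, pd i (lap (d · k)) x ^ 2 :=
  Real.sq_sqrt (by positivity)

variable {d x}

lemma pd_gradNorm_sq (hd : ∀ j k, DifferentiableAt ℝ (pd j (d · k)) x) (i : Fin n) :
    pd i (fun y => gradNorm d y ^ 2) x =
      2 * ∑ j, ∑ k, pd j (d · k) x * pd i (pd j (d · k)) x := by
  simp only [gradNorm_sq, Finset.mul_sum]
  rw [pd_sum i fun j _ => .fun_sum fun k _ => (hd j k).fun_pow 2]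
  refine Finset.sum_congr rfl fun j _ => ?_
  rw [pd_sum i fun k _ => (hd j k).fun_pow 2]
  exact Finset.sum_congr rfl fun k _ => pd_pow_two i (hd j k)

lemma sqrt_sum_pd_gradNorm_sq_le (hd : ∀ j k, DifferentiableAt ℝ (pd j (d · k)) x) :
    √(∑ i, pd i (fun y => gradNorm d y ^ 2) x ^ 2) ≤ 2 * gradNorm d x * hessNorm d x := by
  have cauchySchwarz (i : Fin n) : (∑ j, ∑ k, pd j (d · k) x * pd i (pd j (d · k)) x) ^ 2 ≤
      gradNorm d x ^ 2 * ∑ j, ∑ k, pd i (pd j (d · k)) x ^ 2 := by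
    rw [← Real.sq_sqrt (show 0 ≤ ∑ j, ∑ k, pd i (pd j (d · k)) x ^ 2 by positivity), ← mul_pow]
    exact sq_le_sq.mpr ((abs_sum_sum_mul_le_sqrt_mul_sqrt _ _).trans (le_abs_self _))
  refine Real.sqrt_le_iff.mpr ⟨by unfold gradNorm hessNorm; positivity, ?_⟩
  calc ∑ i, pd i (fun y => gradNorm d y ^ 2) x ^ 2
      = 4 * ∑ i, (∑ j, ∑ k, pd j (d · k) x * pd i (pd j (d · k)) x) ^ 2 := by
        simp only [pd_gradNorm_sq hd, mul_pow, ← Finset.mul_sum]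
        norm_num
    _ ≤ 4 * ∑ i, gradNorm d x ^ 2 * ∑ j, ∑ k, pd i (pd j (d · k)) x ^ 2 := by
        gcongr with i
        exact cauchySchwarz i
    _ = (2 * gradNorm d x * hessNorm d x) ^ 2 := by
        rw [← Finset.mul_sum, ← hessNorm_sq]
        ring

lemma sum_greenIntegrand_gradNorm_sq_le {M R : ℝ}
    (hd : ∀ j k, DifferentiableAt ℝ (pd j (d · k)) x) (hM : gradNorm d x ≤ M) (hR : ‖d x‖ ≤ R) :
    ∑ k, greenIntegrand (fun y => gradNorm d y ^ 2) (d · k) (lap (d · k)) x ≤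
      2 * M ^ 2 * (lapNorm d x * hessNorm d x) + 2 * R * M * (hessNorm d x * gradLapNorm d x)
        + M ^ 2 * lapNorm d x ^ 2 := by
  set f : EuclideanSpace ℝ (Fin n) → ℝ := fun y => gradNorm d y ^ 2
  have hG : 0 ≤ gradNorm d x := Real.sqrt_nonneg _
  have hH : 0 ≤ hessNorm d x := Real.sqrt_nonneg _
  have hL : 0 ≤ lapNorm d x := Real.sqrt_nonneg _
  have hT : 0 ≤ gradLapNorm d x := Real.sqrt_nonneg _
  have hM₀ : 0 ≤ M := hG.trans hM
  have grad_f_le : √(∑ i, pd i f x ^ 2) ≤ 2 * M * hessNorm d x :=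
    (sqrt_sum_pd_gradNorm_sq_le hd).trans (by gcongr)
  have cross_le : ∑ k, gradInner f (d · k) x * lap (d · k) x ≤
      2 * M * hessNorm d x * lapNorm d x * M :=
    (le_abs_self _).trans <| (abs_sum_gradInner_mul_le _ f (fun k => (d · k)) x).trans <|
      mul_le_mul (mul_le_mul_of_nonneg_right grad_f_le hL) hM hG (by positivity)
  have flux_le : -∑ k, gradInner f (lap (d · k)) x * d x k ≤
      2 * M * hessNorm d x * R * gradLapNorm d x := by
    refine (neg_le_abs _).trans <|
      (abs_sum_gradInner_mul_le (d x ·) f (fun k => lap (d · k)) x).trans <|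
      mul_le_mul_of_nonneg_right (mul_le_mul grad_f_le ?_ (Real.sqrt_nonneg _) (by positivity)) hT
    simpa only [EuclideanSpace.norm_eq, Real.norm_eq_abs, sq_abs] using hR
  have diag_le : f x * lapNorm d x ^ 2 ≤ M ^ 2 * lapNorm d x ^ 2 :=
    mul_le_mul_of_nonneg_right (pow_le_pow_left₀ hG hM 2) (sq_nonneg _)
  simp only [greenIntegrand, Finset.sum_sub_distrib, Finset.sum_add_distrib, ← Finset.mul_sum,
    ← sq, ← lapNorm_sq]
  linarith

end Pointwise

variable {d : EuclideanSpace ℝ (Fin n) → EuclideanSpace ℝ κ}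

lemma hasTemperateGrowth_apply {R : ℝ} (hd : Differentiable ℝ d) (hR : ∀ x, ‖d x‖ ≤ R)
    (hS : ∀ i k, IsSchwartz (pd i (d · k))) (k : κ) :
    Function.HasTemperateGrowth (d · k) :=
  hasTemperateGrowth_of_pd (C := R) (k := 0) (differentiable_euclidean.mp hd k)
    (fun x => by simpa using (PiLp.norm_apply_le (d x) k).trans (hR x))
    fun i => (hS i k).hasTemperateGrowth

variable (hS : ∀ i k, IsSchwartz (pd i (d · k)))

include hS

lemma isSchwartz_gradNorm_sq : IsSchwartz (fun x => gradNorm d x ^ 2) := by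
  simp only [gradNorm_sq]
  exact .sum fun i => .sum fun k => (hS i k).pow_two

lemma memLp_hessNorm : MemLp (hessNorm d) 2 :=
  memLp_two_sqrt <| IsSchwartz.integrable
    (.sum fun i => .sum fun j => .sum fun k => ((hS j k).pd i).pow_two) _

lemma memLp_lapNorm : MemLp (lapNorm d) 2 :=
  memLp_two_sqrt <| IsSchwartz.integrable (.sum fun k => (IsSchwartz.lap_of_pd (hS · k)).pow_two) _

lemma memLp_gradLapNorm : MemLp (gradLapNorm d) 2 :=
  memLp_two_sqrt <| IsSchwartz.integrable
    (.sum fun i => .sum fun k => ((IsSchwartz.lap_of_pd (hS · k)).pd i).pow_two) _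

lemma ae_gradNorm_le_essSup : ∀ᵐ x, gradNorm d x ≤ essSup (gradNorm d) volume := by
  obtain ⟨C, hC⟩ := (isSchwartz_gradNorm_sq hS).exists_le
  exact ae_le_essSup ⟨√C, Filter.eventually_map.mpr <| .of_forall fun x =>
    Real.le_sqrt_of_sq_le (hC x)⟩

end Energies

section TargetDimensionThree

lemma gradLinf_eq_essSup (d : EuclideanSpace ℝ (Fin n) → EuclideanSpace ℝ (Fin 3)) :
    gradLinf d = essSup (gradNorm d) volume :=
  rfl

variable {d : EuclideanSpace ℝ (Fin n) → EuclideanSpace ℝ (Fin 3)}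
  (hS : ∀ i k, IsSchwartz (pd i (d · k)))

include hS

lemma lapL2_eq_sqrt_integral : lapL2 d = √(∫ x, lapNorm d x ^ 2) := by
  simp only [lapNorm_sq]
  rw [lapL2, integral_finsetSum _ fun k _ => (IsSchwartz.lap_of_pd (hS · k)).pow_two.integrable _]

lemma hessL2_eq_sqrt_integral : hessL2 d = √(∫ x, hessNorm d x ^ 2) := by
  have hH (i j k) := ((hS j k).pd i).pow_two.integrable volume
  simp only [hessNorm_sq]
  rw [hessL2, integral_finsetSum _ fun i _ => integrable_finsetSum _ fun j _ =>
    integrable_finsetSum _ fun k _ => hH i j k]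
  congr! 2 with i
  rw [integral_finsetSum _ fun j _ => integrable_finsetSum _ fun k _ => hH i j k]
  congr! 1 with j
  rw [integral_finsetSum _ fun k _ => hH i j k]

lemma gradLapL2_eq_sqrt_integral : gradLapL2 d = √(∫ x, gradLapNorm d x ^ 2) := by
  have hT (i k) := ((IsSchwartz.lap_of_pd (hS · k)).pd i).pow_two.integrable volume
  simp only [gradLapNorm_sq]
  rw [gradLapL2, integral_finsetSum _ fun i _ => integrable_finsetSum _ fun k _ => hT i k]
  congr! 2 with i
  rw [integral_finsetSum _ fun k _ => hT i k]

end TargetDimensionThree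

theorem statement11_general {κ : Type*} [Fintype κ]
    {d : EuclideanSpace ℝ (Fin n) → EuclideanSpace ℝ κ} {R : ℝ} (hd : Differentiable ℝ d)
    (hR : ∀ x, ‖d x‖ ≤ R) (hS : ∀ i k, IsSchwartz (pd i (d · k))) :
    ∫ x, ∑ k, lap (fun y => gradNorm d y ^ 2 * d y k) x * lap (d · k) x ≤
      2 * essSup (gradNorm d) volume ^ 2 *
          (√(∫ x, lapNorm d x ^ 2) * √(∫ x, hessNorm d x ^ 2))
        + 2 * R * essSup (gradNorm d) volume *
          (√(∫ x, hessNorm d x ^ 2) * √(∫ x, gradLapNorm d x ^ 2))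
        + essSup (gradNorm d) volume ^ 2 * √(∫ x, lapNorm d x ^ 2) ^ 2 := by
  set M := essSup (gradNorm d) volume
  have hM : ∀ᵐ x, gradNorm d x ≤ M := ae_gradNorm_le_essSup hS
  have hM₀ : 0 ≤ M := hM.exists.elim fun x hx => (Real.sqrt_nonneg _).trans hx
  have hR₀ : 0 ≤ R := (norm_nonneg _).trans (hR 0)
  have hf := isSchwartz_gradNorm_sq hS
  have hu := hasTemperateGrowth_apply hd hR hS
  have hv k := (IsSchwartz.lap_of_pd (hS · k)).hasTemperateGrowth
  have hL := memLp_lapNorm hS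
  have hH := memLp_hessNorm hS
  have hT := memLp_gradLapNorm hS
  calc ∫ x, ∑ k, lap (fun y => gradNorm d y ^ 2 * d y k) x * lap (d · k) x
      = ∫ x, ∑ k, greenIntegrand (fun y => gradNorm d y ^ 2) (d · k) (lap (d · k)) x :=
        integral_sum_lap_mul_mul hf hu hv
    _ ≤ ∫ x, (2 * M ^ 2 * (lapNorm d x * hessNorm d x)
          + 2 * R * M * (hessNorm d x * gradLapNorm d x) + M ^ 2 * lapNorm d x ^ 2) := by
        refine integral_mono_ae
          (IsSchwartz.integrable (.sum fun k => isSchwartz_greenIntegrand hf (hu k) (hv k)) _)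
          ((((hL.integrable_mul hH).const_mul _).add ((hH.integrable_mul hT).const_mul _)).add
            (hL.integrable_sq.const_mul _)) ?_
        filter_upwards [hM] with x hx
        exact sum_greenIntegrand_gradNorm_sq_le (fun j k => (hS j k).differentiable x) hx (hR x)
    _ ≤ _ := integral_mul_add_mul_add_sq_le (by positivity) (by positivity) hL hH hT

/-- ∫ Δ(|∇d|²d)·Δd ≤ C(‖∇d‖∞²‖Δd‖₂‖∇²d‖₂ + ‖∇d‖∞‖∇²d‖₂‖∇Δd‖₂ + ‖∇d‖∞²‖Δd‖₂²),
with C depending only on n. -/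
theorem statement11 (n : ℕ) (hn : 2 ≤ n) :
    ∃ C : ℝ, ∀ d : EuclideanSpace ℝ (Fin n) → EuclideanSpace ℝ (Fin 3),
      ContDiff ℝ (⊤ : ℕ∞) d → (∀ x, ‖d x‖ = 1) →
      (∀ (i : Fin n) (k : Fin 3),
        ∃ g : SchwartzMap (EuclideanSpace ℝ (Fin n)) ℝ,
          ∀ x, g x = pd i (fun z => d z k) x) →
      (∫ x, ∑ k : Fin 3,
          lap (fun y => (∑ i, ∑ k' : Fin 3, (pd i (fun z => d z k') y) ^ 2) * d y k) x
            * lap (fun z => d z k) x)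
        ≤ C * (gradLinf d ^ 2 * lapL2 d * hessL2 d
            + gradLinf d * hessL2 d * gradLapL2 d
            + gradLinf d ^ 2 * lapL2 d ^ 2) := by
  refine ⟨2, fun d hd hd₁ hg => ?_⟩
  have hS i k : IsSchwartz (pd i (d · k)) := (hg i k).imp fun _ => funext
  have main := statement11_general (hd.differentiable (by simp)) (fun x => (hd₁ x).le) hS
  rw [← lapL2_eq_sqrt_integral hS, ← hessL2_eq_sqrt_integral hS,
    ← gradLapL2_eq_sqrt_integral hS, ← gradLinf_eq_essSup] at main
  simp only [← gradNorm_sq]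
  linarith [mul_nonneg (sq_nonneg (gradLinf d)) (sq_nonneg (lapL2 d))]
end
end

section
/- There is a constant C, depending only on the dimension n, with the following property. Let n ≥ 2, let u : ℝⁿ → ℝⁿ be a Schwartz vector field, and let d : ℝⁿ → ℝ³ be smooth with ∇d a Schwartz function. Then | Σ_{i,j=1}^n Σ_{k=1}^3 ∫_{ℝⁿ} ∂_i u_j ∂_i∂_j d_k Δd_k dx | ≤ C ‖∇u‖_{L²} ‖∇d‖_{L^∞} ‖∇Δd‖_{L²}. -/
/-!
Integrating `∂ᵥ((∂ᵥf)³) · f` by parts gives `∫ (∂ᵥf)⁴ = -3 ∫ f (∂ᵥf)² ∂ᵥ∂ᵥf`, so that the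
Cauchy-Schwarz inequality yields the Gagliardo-Nirenberg inequality
`‖∂ᵥf‖₄² ≤ 3 ‖f‖_∞ ‖∂ᵥ∂ᵥf‖₂`. Two further integrations by parts show that the Hessian and the
Laplacian of `f` have the same `L²` norm. For `f = ∂ⱼdₖ` these two facts bound every second
derivative of `d` in `L⁴` by `(3 ‖∇d‖_∞ ‖∇Δd‖₂)^(1/2)`, and Hölder's inequality with exponents
`2, 4, 4` bounds each term of the sum.
-/

open MeasureTheory Real

noncomputable section

open scoped SchwartzMap LineDeriv

section Holder

variable {α : Type*} [MeasurableSpace α] {μ : Measure α} {a b c : α → ℝ}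

theorem abs_integral_mul_le_sqrt_mul_sqrt (ha : MemLp a 2 μ) (hb : MemLp b 2 μ) :
    |∫ x, a x * b x ∂μ| ≤ √(∫ x, a x ^ 2 ∂μ) * √(∫ x, b x ^ 2 ∂μ) := by
  have holder := integral_mul_norm_le_Lp_mul_Lq HolderConjugate.two_two
    (by simpa using ha) (by simpa using hb)
  simp only [rpow_ofNat, norm_eq_abs, sq_abs, ← sqrt_eq_rpow] at holder
  calc |∫ x, a x * b x ∂μ| ≤ ∫ x, |a x * b x| ∂μ := abs_integral_le_integral_abs
    _ = ∫ x, |a x| * |b x| ∂μ := by simp only [abs_mul]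
    _ ≤ _ := holder

theorem memLp_two_mul_of_memLp_four (hb : MemLp b 4 μ) (hc : MemLp c 4 μ) :
    MemLp (fun x ↦ b x * c x) 2 μ := by
  have : ENNReal.HolderTriple 4 4 2 := ⟨by
    rw [← two_mul, show (4 : ENNReal) = 2 * 2 by norm_num, ENNReal.mul_inv (by simp) (by simp),
      ← mul_assoc, ENNReal.mul_inv_cancel (by simp) (by simp), one_mul]⟩
  exact hc.mul' hb

theorem abs_integral_mul_mul_le_sqrt_mul_sqrt (ha : MemLp a 2 μ) (hb : MemLp b 4 μ)
    (hc : MemLp c 4 μ) :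
    |∫ x, a x * (b x * c x) ∂μ| ≤
      √(∫ x, a x ^ 2 ∂μ) * √(√(∫ x, b x ^ 4 ∂μ) * √(∫ x, c x ^ 4 ∂μ)) := by
  have cauchy_schwarz : |∫ x, (b x * b x) * (c x * c x) ∂μ| ≤
      √(∫ x, (b x * b x) ^ 2 ∂μ) * √(∫ x, (c x * c x) ^ 2 ∂μ) :=
    abs_integral_mul_le_sqrt_mul_sqrt (memLp_two_mul_of_memLp_four hb hb)
      (memLp_two_mul_of_memLp_four hc hc)
  have sq_eq (t : ℝ) : (t * t) ^ 2 = t ^ 4 := by ring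
  have integral_eq : ∫ x, (b x * c x) ^ 2 ∂μ = ∫ x, (b x * b x) * (c x * c x) ∂μ :=
    integral_congr_ae (.of_forall fun x ↦ by ring)
  simp only [sq_eq] at cauchy_schwarz
  calc _ ≤ √(∫ x, a x ^ 2 ∂μ) * √(∫ x, (b x * c x) ^ 2 ∂μ) :=
        abs_integral_mul_le_sqrt_mul_sqrt ha (memLp_two_mul_of_memLp_four hb hc)
    _ ≤ _ := by
        rw [integral_eq]
        gcongr
        exact (le_abs_self _).trans cauchy_schwarz

theorem integral_mul_sq_le {M : ℝ} (hb : ∀ x, |b x| ≤ M) (hc : MemLp c 2 μ) :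
    ∫ x, (b x * c x) ^ 2 ∂μ ≤ M ^ 2 * ∫ x, c x ^ 2 ∂μ := by
  rw [← integral_const_mul]
  refine integral_mono_of_nonneg (.of_forall fun x ↦ sq_nonneg _)
    (hc.integrable_sq.const_mul _) (.of_forall fun x ↦ ?_)
  simp only [mul_pow]
  exact mul_le_mul_of_nonneg_right (sq_le_sq' (abs_le.1 (hb x)).1 (abs_le.1 (hb x)).2)
    (sq_nonneg _)

end Holder

theorem single_le_sum_sum {ι κ M : Type*} [Fintype ι] [Fintype κ] [AddCommMonoid M] [PartialOrder M]
    [IsOrderedAddMonoid M] {f : ι → κ → M} (hf : ∀ i j, 0 ≤ f i j) (i : ι) (j : κ) :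
    f i j ≤ ∑ i, ∑ j, f i j :=
  (Finset.single_le_sum (fun j _ ↦ hf i j) (Finset.mem_univ j)).trans
    (Finset.single_le_sum (f := fun i ↦ ∑ j, f i j)
      (fun i _ ↦ Finset.sum_nonneg fun j _ ↦ hf i j) (Finset.mem_univ i))

theorem le_essSup_of_continuous {X : Type*} [TopologicalSpace X] [MeasurableSpace X]
    {μ : Measure X} [μ.IsOpenPosMeasure] {f : X → ℝ} (hf : Continuous f)
    (hbdd : Filter.IsBoundedUnder (· ≤ ·) (ae μ) f) (x : X) : f x ≤ essSup f μ := by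
  have hdense : Dense {x | f x ≤ essSup f μ} := Measure.dense_of_ae (ae_le_essSup hbdd)
  have hclosed : IsClosed {x | f x ≤ essSup f μ} := isClosed_le hf continuous_const
  exact hclosed.closure_subset (hdense x)

theorem fderiv_fderiv_apply_comm {E F : Type*} [NormedAddCommGroup E] [NormedSpace ℝ E]
    [NormedAddCommGroup F] [NormedSpace ℝ F] {f : E → F} {x : E} (hf : ContDiffAt ℝ 2 f x)
    (v w : E) :
    fderiv ℝ (fun y ↦ fderiv ℝ f y v) x w = fderiv ℝ (fun y ↦ fderiv ℝ f y w) x v := by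
  have hdiff : DifferentiableAt ℝ (fderiv ℝ f) x :=
    (hf.fderiv_right (m := 1) le_rfl).differentiableAt one_ne_zero
  have apply_const (v w : E) :
      fderiv ℝ (fun y ↦ fderiv ℝ f y v) x w = fderiv ℝ (fderiv ℝ f) x w v := by
    simp [fderiv_clm_apply hdiff (differentiableAt_const v)]
  rw [apply_const, apply_const]
  exact hf.isSymmSndFDerivAt (by simp) w v

theorem abs_le_essSup_sqrt_sum_sq {E ι κ : Type*} [NormedAddCommGroup E] [NormedSpace ℝ E]
    [MeasurableSpace E] {μ : Measure E} [μ.IsOpenPosMeasure] [Fintype ι] [Fintype κ]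
    (g : ι → κ → 𝓢(E, ℝ)) (i : ι) (k : κ) (x : E) :
    |g i k x| ≤ essSup (fun x ↦ √(∑ i, ∑ k, g i k x ^ 2)) μ := by
  have hcont : Continuous fun x ↦ √(∑ i, ∑ k, g i k x ^ 2) := by fun_prop
  have hbdd : Filter.IsBoundedUnder (· ≤ ·) (ae μ) fun x ↦ √(∑ i, ∑ k, g i k x ^ 2) := by
    refine Filter.isBoundedUnder_of
      ⟨√(∑ i, ∑ k, SchwartzMap.seminorm ℝ 0 0 (g i k) ^ 2), fun x ↦ ?_⟩
    gcongr √(∑ i, ∑ k, ?_) with i _ k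
    exact sq_le_sq.2 (((g i k).norm_le_seminorm ℝ x).trans (le_abs_self _))
  refine le_trans (abs_le_sqrt ?_) (le_essSup_of_continuous hcont hbdd x)
  exact single_le_sum_sum (f := fun i k ↦ g i k x ^ 2) (fun _ _ ↦ sq_nonneg _) i k

section Schwartz

variable {E : Type*} [NormedAddCommGroup E] [NormedSpace ℝ E]

theorem schwartz_lineDeriv_comm {F : Type*} [NormedAddCommGroup F] [NormedSpace ℝ F] (v w : E)
    (f : 𝓢(E, F)) : ∂_{v} (∂_{w} f) = ∂_{w} (∂_{v} f) := by
  ext x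
  exact fderiv_fderiv_apply_comm (f.smooth 2).contDiffAt w v

variable [MeasurableSpace E] [BorelSpace E] [FiniteDimensional ℝ E] {μ : Measure E}
  [μ.IsAddHaarMeasure]

theorem integrable_mul_schwartz {h : E → ℝ} (hh : h.HasTemperateGrowth) (f : 𝓢(E, ℝ)) :
    Integrable (fun x ↦ h x * f x) μ := by
  simpa only [SchwartzMap.smulLeftCLM_apply hh, smul_eq_mul] using!
    (SchwartzMap.smulLeftCLM ℝ h f).integrable (μ := μ)

theorem integral_lineDeriv_pow_add_two (v : E) (f : 𝓢(E, ℝ)) (m : ℕ) :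
    ∫ x, ∂_{v} f x ^ (m + 2) ∂μ =
      -((m + 1) * ∫ x, ∂_{v} f x ^ m * (f x * ∂_{v} (∂_{v} f) x) ∂μ) := by
  have hf := (∂_{v} f).hasTemperateGrowth
  have hasLineDerivAt_pow (x : E) : HasLineDerivAt ℝ (fun x ↦ ∂_{v} f x ^ (m + 1))
      ((m + 1) * ∂_{v} f x ^ m * ∂_{v} (∂_{v} f) x) x v := by
    convert! (((∂_{v} f).hasFDerivAt x).pow (m + 1)).hasLineDerivAt v using 1
    simp [SchwartzMap.lineDerivOp_apply_eq_fderiv (f := ∂_{v} f)]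
  have by_parts := integral_bilinear_hasLineDerivAt_right_eq_neg_left_of_integrable (μ := μ)
    (B := ContinuousLinearMap.mul ℝ ℝ)
    (integrable_mul_schwartz (by fun_prop) f) (integrable_mul_schwartz (by fun_prop) (∂_{v} f))
    (integrable_mul_schwartz (by fun_prop) f) (fun x _ ↦ hasLineDerivAt_pow x)
    (fun x _ ↦ (f.hasFDerivAt x).hasLineDerivAt v)
  calc _ = ∫ x, ∂_{v} f x ^ (m + 1) * ∂_{v} f x ∂μ := by simp only [pow_succ]
    _ = -∫ x, (m + 1) * ∂_{v} f x ^ m * ∂_{v} (∂_{v} f) x * f x ∂μ := by_parts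
    _ = _ := by
      rw [← integral_const_mul]
      congr! 3
      ring

theorem sqrt_integral_lineDeriv_pow_four_le (v : E) {f : 𝓢(E, ℝ)} {M : ℝ}
    (hM : ∀ x, |f x| ≤ M) :
    √(∫ x, ∂_{v} f x ^ 4 ∂μ) ≤ 3 * M * √(∫ x, ∂_{v} (∂_{v} f) x ^ 2 ∂μ) := by
  set b := ∂_{v} f
  set c := ∂_{v} b
  have hM₀ : 0 ≤ M := (abs_nonneg _).trans (hM 0)
  have memLp_sq : MemLp (fun x ↦ b x ^ 2) 2 μ := by
    simpa only [sq] using! memLp_two_mul_of_memLp_four (b.memLp 4 μ) (b.memLp 4 μ)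
  have memLp_mul : MemLp (fun x ↦ f x * c x) 2 μ :=
    memLp_two_mul_of_memLp_four (f.memLp 4 μ) (c.memLp 4 μ)
  have integral_le : √(∫ x, b x ^ 4 ∂μ) * √(∫ x, b x ^ 4 ∂μ) ≤
      √(∫ x, b x ^ 4 ∂μ) * (3 * M * √(∫ x, c x ^ 2 ∂μ)) :=
    calc _ = ∫ x, b x ^ 4 ∂μ :=
          mul_self_sqrt (integral_nonneg fun x ↦ Even.pow_nonneg (by decide) _)
      _ = -(3 * ∫ x, b x ^ 2 * (f x * c x) ∂μ) := by
          rw [integral_lineDeriv_pow_add_two v f 2]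
          norm_num [b, c]
      _ ≤ 3 * |∫ x, b x ^ 2 * (f x * c x) ∂μ| := by
          linarith [neg_abs_le (∫ x, b x ^ 2 * (f x * c x) ∂μ)]
      _ ≤ 3 * (√(∫ x, (b x ^ 2) ^ 2 ∂μ) * √(∫ x, (f x * c x) ^ 2 ∂μ)) := by
          gcongr
          exact abs_integral_mul_le_sqrt_mul_sqrt memLp_sq memLp_mul
      _ ≤ 3 * (√(∫ x, b x ^ 4 ∂μ) * √(M ^ 2 * ∫ x, c x ^ 2 ∂μ)) := by
          simp only [← pow_mul]
          gcongr
          exact integral_mul_sq_le hM (c.memLp 2 μ)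
      _ = _ := by
          rw [sqrt_mul (sq_nonneg M), sqrt_sq hM₀]
          ring
  rcases (sqrt_nonneg (∫ x, b x ^ 4 ∂μ)).eq_or_lt with h | h
  · rw [← h]
    positivity
  · exact le_of_mul_le_mul_left integral_le h

theorem integral_lineDeriv_lineDeriv_mul_comm (v w : E) (f : 𝓢(E, ℝ)) :
    ∫ x, ∂_{v} (∂_{v} f) x * ∂_{w} (∂_{w} f) x ∂μ = ∫ x, ∂_{v} (∂_{w} f) x ^ 2 ∂μ := by
  calc _ = -∫ x, ∂_{w} (∂_{v} (∂_{v} f)) x * ∂_{w} f x ∂μ :=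
        SchwartzMap.integral_mul_lineDerivOp_right_eq_neg_left ..
    _ = -∫ x, ∂_{v} (∂_{v} (∂_{w} f)) x * ∂_{w} f x ∂μ := by
        simp only [schwartz_lineDeriv_comm w v]
    _ = ∫ x, ∂_{v} (∂_{w} f) x * ∂_{v} (∂_{w} f) x ∂μ :=
        (SchwartzMap.integral_mul_lineDerivOp_right_eq_neg_left ..).symm
    _ = _ := by simp only [sq]

variable {ι κ : Type*} [Fintype ι] [Fintype κ] (e : ι → E)

theorem integral_sq_sum_lineDeriv_lineDeriv (f : 𝓢(E, ℝ)) :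
    ∫ x, (∑ l, ∂_{e l} (∂_{e l} f) x) ^ 2 ∂μ =
      ∑ l, ∑ m, ∫ x, ∂_{e l} (∂_{e m} f) x ^ 2 ∂μ := by
  have integrable_mul (l m : ι) :
      Integrable (fun x ↦ ∂_{e l} (∂_{e l} f) x * ∂_{e m} (∂_{e m} f) x) μ :=
    integrable_mul_schwartz (SchwartzMap.hasTemperateGrowth _) _
  simp only [sq (Finset.sum _ _), Finset.sum_mul_sum]
  rw [integral_finsetSum _ fun l _ ↦ integrable_finsetSum _ fun m _ ↦ integrable_mul l m]
  refine Finset.sum_congr rfl fun l _ ↦ ?_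
  rw [integral_finsetSum _ fun m _ ↦ integrable_mul l m]
  simp only [integral_lineDeriv_lineDeriv_mul_comm]

theorem sqrt_integral_lineDeriv_pow_four_le_laplacian (i : ι) {f : 𝓢(E, ℝ)} {M N : ℝ}
    (hM : ∀ x, |f x| ≤ M) (hN : √(∫ x, (∑ l, ∂_{e l} (∂_{e l} f) x) ^ 2 ∂μ) ≤ N) :
    √(∫ x, ∂_{e i} f x ^ 4 ∂μ) ≤ 3 * M * N := by
  have hM₀ : 0 ≤ M := (abs_nonneg _).trans (hM 0)
  refine (sqrt_integral_lineDeriv_pow_four_le (e i) hM).trans ?_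
  gcongr
  refine (sqrt_le_sqrt ?_).trans hN
  rw [integral_sq_sum_lineDeriv_lineDeriv]
  exact single_le_sum_sum (f := fun l m ↦ ∫ x, ∂_{e l} (∂_{e m} f) x ^ 2 ∂μ)
    (fun _ _ ↦ integral_nonneg fun _ ↦ sq_nonneg _) i i

theorem abs_integral_mul_lineDeriv_mul_lineDeriv_le {a : E → ℝ} (ha : MemLp a 2 μ) (i j : ι)
    {f g : 𝓢(E, ℝ)} {M N : ℝ} (hfM : ∀ x, |f x| ≤ M) (hgM : ∀ x, |g x| ≤ M)
    (hfN : √(∫ x, (∑ l, ∂_{e l} (∂_{e l} f) x) ^ 2 ∂μ) ≤ N)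
    (hgN : √(∫ x, (∑ l, ∂_{e l} (∂_{e l} g) x) ^ 2 ∂μ) ≤ N) :
    |∫ x, a x * (∂_{e i} f x * ∂_{e j} g x) ∂μ| ≤ √(∫ x, a x ^ 2 ∂μ) * (3 * M * N) := by
  have hM₀ : 0 ≤ M := (abs_nonneg _).trans (hfM 0)
  have hN₀ : 0 ≤ N := (sqrt_nonneg _).trans hfN
  refine (abs_integral_mul_mul_le_sqrt_mul_sqrt ha ((∂_{e i} f).memLp 4 μ)
    ((∂_{e j} g).memLp 4 μ)).trans (mul_le_mul_of_nonneg_left ?_ (sqrt_nonneg _))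
  calc _ ≤ √((3 * M * N) * (3 * M * N)) := by
        gcongr
        · exact sqrt_integral_lineDeriv_pow_four_le_laplacian e i hfM hfN
        · exact sqrt_integral_lineDeriv_pow_four_le_laplacian e j hgM hgN
    _ = 3 * M * N := sqrt_mul_self (by positivity)

theorem abs_integral_mul_lineDeriv_mul_divergence_le {a : E → ℝ} (ha : MemLp a 2 μ) (i j : ι)
    {g : ι → 𝓢(E, ℝ)} {M N : ℝ} (hM : ∀ l x, |g l x| ≤ M)
    (hN : ∀ l, √(∫ x, (∑ m, ∂_{e m} (∂_{e m} (g l)) x) ^ 2 ∂μ) ≤ N) :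
    |∫ x, a x * ∂_{e i} (g j) x * ∑ l, ∂_{e l} (g l) x ∂μ| ≤
      Fintype.card ι * (√(∫ x, a x ^ 2 ∂μ) * (3 * M * N)) := by
  have integrable_mul (l : ι) :
      Integrable (fun x ↦ a x * (∂_{e i} (g j) x * ∂_{e l} (g l) x)) μ :=
    ha.integrable_mul (memLp_two_mul_of_memLp_four ((∂_{e i} (g j)).memLp 4 μ)
      ((∂_{e l} (g l)).memLp 4 μ))
  simp only [mul_assoc (a _), Finset.mul_sum]
  rw [integral_finsetSum _ fun l _ ↦ integrable_mul l]
  calc _ ≤ ∑ l, |∫ x, a x * (∂_{e i} (g j) x * ∂_{e l} (g l) x) ∂μ| :=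
        Finset.abs_sum_le_sum_abs _ _
    _ ≤ ∑ _l : ι, √(∫ x, a x ^ 2 ∂μ) * (3 * M * N) :=
        Finset.sum_le_sum fun l _ ↦ abs_integral_mul_lineDeriv_mul_lineDeriv_le e ha i l
          (hM j) (hM l) (hN j) (hN l)
    _ = _ := by simp

theorem abs_sum_integral_mul_lineDeriv_mul_divergence_le {a : ι → ι → E → ℝ}
    (ha : ∀ i j, MemLp (a i j) 2 μ) {g : ι → κ → 𝓢(E, ℝ)} {M : ℝ}
    (hM : ∀ i k x, |g i k x| ≤ M) :
    |∑ i, ∑ j, ∑ k, ∫ x, a i j x * ∂_{e i} (g j k) x * ∑ l, ∂_{e l} (g l k) x ∂μ| ≤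
      3 * Fintype.card κ * Fintype.card ι ^ 3 * (√(∑ i, ∑ j, ∫ x, a i j x ^ 2 ∂μ) * M *
        √(∑ i, ∑ k, ∫ x, (∑ l, ∂_{e l} (∂_{e l} (g i k)) x) ^ 2 ∂μ)) := by
  set A := √(∑ i, ∑ j, ∫ x, a i j x ^ 2 ∂μ)
  set N := √(∑ i, ∑ k, ∫ x, (∑ l, ∂_{e l} (∂_{e l} (g i k)) x) ^ 2 ∂μ)
  have hA (i j : ι) : √(∫ x, a i j x ^ 2 ∂μ) ≤ A :=
    sqrt_le_sqrt (single_le_sum_sum (f := fun i j ↦ ∫ x, a i j x ^ 2 ∂μ)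
      (fun _ _ ↦ integral_nonneg fun _ ↦ sq_nonneg _) i j)
  have hN (i : ι) (k : κ) : √(∫ x, (∑ l, ∂_{e l} (∂_{e l} (g i k)) x) ^ 2 ∂μ) ≤ N :=
    sqrt_le_sqrt (single_le_sum_sum
      (f := fun i k ↦ ∫ x, (∑ l, ∂_{e l} (∂_{e l} (g i k)) x) ^ 2 ∂μ)
      (fun _ _ ↦ integral_nonneg fun _ ↦ sq_nonneg _) i k)
  have term_le (i j : ι) (k : κ) :
      |∫ x, a i j x * ∂_{e i} (g j k) x * ∑ l, ∂_{e l} (g l k) x ∂μ| ≤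
        Fintype.card ι * (A * (3 * M * N)) := by
    have hM₀ : 0 ≤ M := (abs_nonneg _).trans (hM i k 0)
    refine (abs_integral_mul_lineDeriv_mul_divergence_le e (ha i j) i j (fun l ↦ hM l k)
      (fun l ↦ hN l k)).trans ?_
    gcongr
    exact hA i j
  calc _ ≤ ∑ i, ∑ j, ∑ k, |∫ x, a i j x * ∂_{e i} (g j k) x * ∑ l, ∂_{e l} (g l k) x ∂μ| := by
        refine (Finset.abs_sum_le_sum_abs _ _).trans (Finset.sum_le_sum fun i _ ↦ ?_)
        refine (Finset.abs_sum_le_sum_abs _ _).trans (Finset.sum_le_sum fun j _ ↦ ?_)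
        exact Finset.abs_sum_le_sum_abs _ _
    _ ≤ ∑ _i : ι, ∑ _j : ι, ∑ _k : κ, Fintype.card ι * (A * (3 * M * N)) := by
        gcongr
        exact term_le ..
    _ = _ := by
        simp only [Finset.sum_const, Finset.card_univ, nsmul_eq_mul]
        ring

end Schwartz

section Gradient

variable {n : ℕ} {d : EuclideanSpace ℝ (Fin n) → ℝ} {g : Fin n → 𝓢(EuclideanSpace ℝ (Fin n), ℝ)}

theorem lap_eq_sum_lineDeriv (hg : ∀ i, pd i d = g i) (x : EuclideanSpace ℝ (Fin n)) :
    lap d x = ∑ l : Fin n, ∂_{EuclideanSpace.single l (1 : ℝ)} (g l) x := by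
  simp only [lap, hg]
  rfl

theorem pd_lap_eq_sum_lineDeriv (hd : ContDiff ℝ 2 d) (hg : ∀ i, pd i d = g i) (i : Fin n)
    (x : EuclideanSpace ℝ (Fin n)) :
    pd i (lap d) x = ∑ l : Fin n, ∂_{EuclideanSpace.single l (1 : ℝ)}
      (∂_{EuclideanSpace.single l (1 : ℝ)} (g i)) x := by
  have mixed_partials (l : Fin n) : ∂_{EuclideanSpace.single i (1 : ℝ)} (g l) =
      ∂_{EuclideanSpace.single l (1 : ℝ)} (g i) := by
    ext y
    change pd i (g l) y = pd l (g i) y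
    rw [← hg l, ← hg i]
    exact fderiv_fderiv_apply_comm hd.contDiffAt _ _
  let lapSchwartz : 𝓢(EuclideanSpace ℝ (Fin n), ℝ) :=
    ∑ l : Fin n, ∂_{EuclideanSpace.single l (1 : ℝ)} (g l)
  have lap_eq : lap d = lapSchwartz := by
    ext y
    simp only [lap_eq_sum_lineDeriv hg, lapSchwartz, sum_apply]
  calc pd i (lap d) x = ∂_{EuclideanSpace.single i (1 : ℝ)} lapSchwartz x := by rw [lap_eq]; rfl
    _ = ∑ l : Fin n, ∂_{EuclideanSpace.single i (1 : ℝ)}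
          (∂_{EuclideanSpace.single l (1 : ℝ)} (g l)) x := by
        simp only [lapSchwartz, LineDeriv.lineDerivOp_sum, sum_apply]
    _ = _ := by simp only [schwartz_lineDeriv_comm (EuclideanSpace.single i (1 : ℝ)),
          mixed_partials]

end Gradient

theorem statement12_general {n : ℕ} {κ : Type*} [Fintype κ]
    {a : Fin n → Fin n → EuclideanSpace ℝ (Fin n) → ℝ} (ha : ∀ i j, MemLp (a i j) 2)
    {d : κ → EuclideanSpace ℝ (Fin n) → ℝ} (hd : ∀ k, ContDiff ℝ 2 (d k))
    (hgrad : ∀ i k, ∃ g : 𝓢(EuclideanSpace ℝ (Fin n), ℝ), ∀ x, g x = pd i (d k) x) :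
    |∑ i, ∑ j, ∑ k, ∫ x, a i j x * pd i (pd j (d k)) x * lap (d k) x| ≤
      3 * Fintype.card κ * n ^ 3 * (√(∑ i, ∑ j, ∫ x, a i j x ^ 2) *
        essSup (fun x ↦ √(∑ i, ∑ k, pd i (d k) x ^ 2)) volume *
        √(∑ i, ∑ k, ∫ x, pd i (lap (d k)) x ^ 2)) := by
  choose g hg using hgrad
  have pd_eq (i : Fin n) (k : κ) : pd i (d k) = g i k := (funext (hg i k)).symm
  have main := abs_sum_integral_mul_lineDeriv_mul_divergence_le
    (fun i : Fin n ↦ EuclideanSpace.single i (1 : ℝ)) ha (abs_le_essSup_sqrt_sum_sq g (μ := volume))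
  simp only [pd_lap_eq_sum_lineDeriv (hd _) fun i ↦ pd_eq i _,
    lap_eq_sum_lineDeriv fun i ↦ pd_eq i _, pd_eq]
  simpa only [Fintype.card_fin] using! main

/-- |Σ ∫ ∂ᵢu_j ∂ᵢ∂_j d_k Δd_k| ≤ C ‖∇u‖_{L²} ‖∇d‖_{L^∞} ‖∇Δd‖_{L²},
with C depending only on n. -/
theorem statement12 (n : ℕ) (hn : 2 ≤ n) :
    ∃ C : ℝ, ∀ (u : SchwartzMap (EuclideanSpace ℝ (Fin n)) (EuclideanSpace ℝ (Fin n)))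
      (d : EuclideanSpace ℝ (Fin n) → EuclideanSpace ℝ (Fin 3)),
      ContDiff ℝ (⊤ : ℕ∞) d →
      (∀ (i : Fin n) (k : Fin 3),
        ∃ g : SchwartzMap (EuclideanSpace ℝ (Fin n)) ℝ,
          ∀ x, g x = pd i (fun z => d z k) x) →
      |∑ i, ∑ j, ∑ k : Fin 3,
          ∫ x, pd i (fun y => u y j) x * pd i (pd j (fun z => d z k)) x
            * lap (fun z => d z k) x|
        ≤ C * (gradL2u (fun y => u y) * gradLinf d * gradLapL2 d) := by
  refine ⟨3 * Fintype.card (Fin 3) * n ^ 3, fun u d hd hgrad ↦ statement12_general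
    (fun i j ↦ ?_) (fun k ↦ ?_) hgrad⟩
  · exact (∂_{EuclideanSpace.single i (1 : ℝ)}
      (SchwartzMap.postcompCLM (𝕜 := ℝ) (EuclideanSpace.proj (𝕜 := ℝ) j) u)).memLp 2 volume
  · exact (EuclideanSpace.proj (𝕜 := ℝ) k).contDiff.comp (contDiff_infty.1 hd 2)
end
end
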